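/- For every unit spinor φ ∈ Δ, the eight vectors (φ, e_1(φ), e_2(φ), e_3(φ), e_4(φ), e_5(φ), e_6(φ), e_7(φ)) form an orthonormal basis of ℝ^8; in particular Δ = ℝφ ⊕ {x·φ : x ∈ ℝ^7} is an orthogonal direct sum. -/

import Mathlib

open RealInnerProductSpace

noncomputable section

/-- The spin representation space Δ = ℝ^8. -/
abbrev Δ : Type := EuclideanSpace ℝ (Fin 8)

/-- The standard skew endomorphism E_{ij} of ℝ^8: u_i ↦ u_j, u_j ↦ -u_i, others ↦ 0. -/
def E (i j : Fin 8) : Δ →ₗ[ℝ] Δ where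
  toFun v := v i • EuclideanSpace.single j (1 : ℝ) - v j • EuclideanSpace.single i (1 : ℝ)
  map_add' x y := by
    simp only [PiLp.add_apply, add_smul]
    module
  map_smul' c x := by
    simp only [PiLp.smul_apply, smul_eq_mul, RingHom.id_apply, mul_smul]
    module

/-- The seven Clifford endomorphisms e_1, …, e_7 (indexed 0,…,6). -/
def cliff : Fin 7 → (Δ →ₗ[ℝ] Δ) :=
  ![  E 0 7 + E 1 6 - E 2 5 - E 3 4,
    - E 0 6 + E 1 7 + E 2 4 - E 3 5,
    - E 0 5 + E 1 4 - E 2 7 + E 3 6,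
    - E 0 4 - E 1 5 - E 2 6 - E 3 7,
    - E 0 2 - E 1 3 + E 4 6 + E 5 7,
      E 0 3 - E 1 2 - E 4 7 + E 5 6,
      E 0 1 - E 2 3 - E 4 5 + E 6 7]

/-- j = e_1 ∘ e_2 ∘ e_3 ∘ e_4 ∘ e_5 ∘ e_6. -/
def jmap : Δ →ₗ[ℝ] Δ :=
  cliff 0 ∘ₗ cliff 1 ∘ₗ cliff 2 ∘ₗ cliff 3 ∘ₗ cliff 4 ∘ₗ cliff 5

/-- Clifford multiplication of a vector x ∈ ℝ^6 on a spinor. -/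
def cm6 (x : EuclideanSpace ℝ (Fin 6)) (φ : Δ) : Δ :=
  ∑ i : Fin 6, x i • cliff i.castSucc φ

/-- Clifford multiplication of a vector x ∈ ℝ^7 on a spinor. -/
def cm7 (x : EuclideanSpace ℝ (Fin 7)) (φ : Δ) : Δ :=
  ∑ i : Fin 7, x i • cliff i φ

/-!
The `cliff i` are skew-adjoint, square to `-1` and anticommute pairwise. Skewness gives
`⟪φ, cliff i φ⟫ = 0`, and for `i ≠ j` it turns `⟪cliff i φ, cliff j φ⟫` into
`-⟪φ, cliff i (cliff j φ)⟫`, which anticommutation shows to be its own negative; the square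
relation makes each `cliff i` an isometry. The Clifford relations themselves are sign identities:
each `cliff i` permutes the coordinates, up to sign, by a bitwise xor with a fixed mask on their
indices `0, …, 7`, and such permutations are commuting involutions.
-/

section SkewAdjoint

variable {V : Type*} [NormedAddCommGroup V] [InnerProductSpace ℝ V] {f g : V →ₗ[ℝ] V}

lemma inner_apply_left_of_isSkewAdjoint (hf : (innerₗ V).IsSkewAdjoint f) (v w : V) :
    ⟪f v, w⟫ = -⟪v, f w⟫ := by
  simpa using hf v w

lemma inner_self_apply_of_isSkewAdjoint (hf : (innerₗ V).IsSkewAdjoint f) (v : V) :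
    ⟪v, f v⟫ = 0 := by
  have hneg : ⟪v, f v⟫ = -⟪v, f v⟫ := by
    rw [← inner_apply_left_of_isSkewAdjoint hf, real_inner_comm]
  linarith

lemma inner_apply_apply_of_isSkewAdjoint_of_sq (hf : (innerₗ V).IsSkewAdjoint f)
    (hsq : f ∘ₗ f = -LinearMap.id) (v w : V) : ⟪f v, f w⟫ = ⟪v, w⟫ := by
  have hffw : f (f w) = -w := LinearMap.congr_fun hsq w
  rw [inner_apply_left_of_isSkewAdjoint hf, hffw, inner_neg_right, neg_neg]

lemma inner_apply_apply_of_isSkewAdjoint_of_anticomm (hf : (innerₗ V).IsSkewAdjoint f)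
    (hg : (innerₗ V).IsSkewAdjoint g) (hfg : f ∘ₗ g = -(g ∘ₗ f)) (v : V) :
    ⟪f v, g v⟫ = 0 := by
  have hneg : ⟪f v, g v⟫ = -⟪f v, g v⟫ :=
    calc ⟪f v, g v⟫ = -⟪v, f (g v)⟫ := inner_apply_left_of_isSkewAdjoint hf v (g v)
      _ = ⟪v, g (f v)⟫ := by
        rw [show f (g v) = -g (f v) from LinearMap.congr_fun hfg v, inner_neg_right, neg_neg]
      _ = -⟪g v, f v⟫ := by rw [inner_apply_left_of_isSkewAdjoint hg, neg_neg]
      _ = -⟪f v, g v⟫ := by rw [real_inner_comm]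
  linarith

lemma orthonormal_apply_of_clifford {ι : Type*} {c : ι → V →ₗ[ℝ] V}
    (hskew : ∀ i, (innerₗ V).IsSkewAdjoint (c i)) (hsq : ∀ i, c i ∘ₗ c i = -LinearMap.id)
    (hanticomm : Pairwise fun i j => c i ∘ₗ c j = -(c j ∘ₗ c i)) {v : V} (hv : ⟪v, v⟫ = 1) :
    Orthonormal ℝ fun i => c i v := by
  classical
  rw [orthonormal_iff_ite]
  intro i j
  split_ifs with hij
  · rw [← hij, inner_apply_apply_of_isSkewAdjoint_of_sq (hskew i) (hsq i), hv]
  · exact inner_apply_apply_of_isSkewAdjoint_of_anticomm (hskew i) (hskew j) (hanticomm hij) v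

lemma orthonormal_vecCons_apply_of_clifford {n : ℕ} {c : Fin n → V →ₗ[ℝ] V}
    (hskew : ∀ i, (innerₗ V).IsSkewAdjoint (c i)) (hsq : ∀ i, c i ∘ₗ c i = -LinearMap.id)
    (hanticomm : Pairwise fun i j => c i ∘ₗ c j = -(c j ∘ₗ c i)) {v : V} (hv : ⟪v, v⟫ = 1) :
    Orthonormal ℝ (Matrix.vecCons v fun i => c i v) := by
  have hnorm : ‖v‖ = 1 := by rw [norm_eq_sqrt_real_inner, hv, Real.sqrt_one]
  exact orthonormal_vecCons_iff.2 ⟨hnorm,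
    fun i => inner_self_apply_of_isSkewAdjoint (hskew i) v,
    orthonormal_apply_of_clifford hskew hsq hanticomm hv⟩

end SkewAdjoint

lemma E_apply (i j : Fin 8) (v : Δ) (k : Fin 8) :
    E i j v k = (if k = j then v i else 0) - (if k = i then v j else 0) := by
  simp [E, PiLp.single_apply]

lemma isSkewAdjoint_E (i j : Fin 8) : (innerₗ Δ).IsSkewAdjoint (E i j) := by
  intro v w
  simp only [E, LinearMap.coe_mk, AddHom.coe_mk, innerₗ_apply_apply, Pi.neg_apply,
    inner_neg_right, inner_sub_left, inner_sub_right, inner_smul_left, inner_smul_right,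
    EuclideanSpace.inner_single_left, EuclideanSpace.inner_single_right, conj_trivial, one_mul]
  ring

lemma cliff_mem_of_forall_E_mem {S : Submodule ℝ (Δ →ₗ[ℝ] Δ)} (hE : ∀ a b, E a b ∈ S)
    (i : Fin 7) : cliff i ∈ S := by
  fin_cases i <;> apply_rules [add_mem, sub_mem, neg_mem]

lemma isSkewAdjoint_cliff (i : Fin 7) : (innerₗ Δ).IsSkewAdjoint (cliff i) :=
  (LinearMap.mem_skewAdjointSubmodule _).1 <| cliff_mem_of_forall_E_mem
    (fun a b => (LinearMap.mem_skewAdjointSubmodule _).2 (isSkewAdjoint_E a b)) i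

/-- The sign, in `{1, -1}`, of the only nonzero entry in row `k` of the matrix of `cliff i`; it is
an integer so that the sign identities behind the Clifford relations are decidable. -/
def cliffSign : Fin 7 → Fin 8 → ℤ :=
  ![![-1, -1, 1, 1, -1, -1, 1, 1],
    ![1, -1, -1, 1, 1, -1, -1, 1],
    ![1, -1, 1, -1, 1, -1, 1, -1],
    ![1, 1, 1, 1, -1, -1, -1, -1],
    ![1, 1, -1, -1, -1, -1, 1, 1],
    ![-1, 1, -1, 1, 1, -1, 1, -1],
    ![-1, 1, 1, -1, 1, -1, -1, 1]]

/-- The coordinate permutation underlying `cliff i`, encoded as a bit mask: the nonzero entry in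
row `k` of the matrix of `cliff i` is in column `k ^^^ cliffMask i`. -/
def cliffMask : Fin 7 → Fin 8 := ![7, 6, 5, 4, 2, 3, 1]

lemma cliff_apply (i : Fin 7) (v : Δ) (k : Fin 8) :
    cliff i v k = cliffSign i k • v (k ^^^ cliffMask i) := by
  revert i k
  simp [cliff, E_apply, cliffSign, cliffMask, Fin.forall_fin_succ]

lemma cliffSign_mul_self (i : Fin 7) (k : Fin 8) :
    cliffSign i k * cliffSign i (k ^^^ cliffMask i) = -1 := by
  decide +revert

lemma cliffSign_mul_anticomm {i j : Fin 7} (hij : i ≠ j) (k : Fin 8) :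
    cliffSign i k * cliffSign j (k ^^^ cliffMask i) =
      -(cliffSign j k * cliffSign i (k ^^^ cliffMask j)) := by
  decide +revert

lemma cliff_comp_self (i : Fin 7) : cliff i ∘ₗ cliff i = -LinearMap.id := by
  ext v k
  have hxor : k ^^^ cliffMask i ^^^ cliffMask i = k := by decide +revert
  calc cliff i (cliff i v) k
      = (cliffSign i k * cliffSign i (k ^^^ cliffMask i)) • v k := by
        rw [cliff_apply, cliff_apply, smul_smul, hxor]
    _ = -v k := by rw [cliffSign_mul_self, neg_one_smul]

lemma cliff_anticomm : Pairwise fun i j => cliff i ∘ₗ cliff j = -(cliff j ∘ₗ cliff i) := by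
  intro i j hij
  ext v k
  have hxor : k ^^^ cliffMask i ^^^ cliffMask j = k ^^^ cliffMask j ^^^ cliffMask i := by
    decide +revert
  calc cliff i (cliff j v) k
      = (cliffSign i k * cliffSign j (k ^^^ cliffMask i)) •
          v (k ^^^ cliffMask i ^^^ cliffMask j) := by
        rw [cliff_apply, cliff_apply, smul_smul]
    _ = -((cliffSign j k * cliffSign i (k ^^^ cliffMask j)) •
          v (k ^^^ cliffMask j ^^^ cliffMask i)) := by
        rw [cliffSign_mul_anticomm hij, neg_smul, hxor]
    _ = -cliff j (cliff i v) k := by rw [cliff_apply j, cliff_apply i, smul_smul]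

/-- For every unit spinor φ, the eight vectors (φ, e_1(φ), …, e_7(φ)) form an
orthonormal basis of ℝ^8. -/
theorem orthonormal_basis_from_unit_spinor_dim7 (φ : Δ) (hφ : ⟪φ, φ⟫ = 1) :
    Orthonormal ℝ
      ![φ, cliff 0 φ, cliff 1 φ, cliff 2 φ, cliff 3 φ, cliff 4 φ, cliff 5 φ, cliff 6 φ] ∧
    Submodule.span ℝ
      (Set.range
        ![φ, cliff 0 φ, cliff 1 φ, cliff 2 φ, cliff 3 φ, cliff 4 φ,
          cliff 5 φ, cliff 6 φ]) = ⊤ := by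
  have horthonormal := orthonormal_vecCons_apply_of_clifford isSkewAdjoint_cliff
    cliff_comp_self cliff_anticomm hφ
  rw [← FinVec.etaExpand_eq fun i => cliff i φ] at horthonormal
  exact ⟨horthonormal,
    horthonormal.linearIndependent.span_eq_top_of_card_eq_finrank (by simp)⟩

end
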